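/- Define the Hirzebruch–Jung continued fraction of a nonempty list of integers recursively by [a]⁻ = a and [a_0, a_1, …, a_n]⁻ = a_0 − 1/[a_1, …, a_n]⁻ (an element of ℚ; each tail occurring here evaluates to a rational number greater than 1, so the recursion is well defined). Then for all integers s ≥ 0 and t ≥ 1, the continued fraction whose entry list consists of s+1 copies of 2, followed by 3, 2, 2, s+3, followed by t−1 copies of 2, i.e. [2^{[s+1]}, 3, 2, 2, s+3, 2^{[t−1]}]⁻, equals p/q, where p = 11 + 4s + 14t + 16st + 4s²t and q = 7 + 4s + 9t + 12st + 4s²t. -/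

import Mathlib

/-!
Prepending an entry `a` to a list of value `x` gives `a - 1 / x`. For `a = 2` and `x = A / B` this
is `(A + (A - B)) / (B + (A - B))`, so `k` leading twos add `k (A - B)` to both numerator and
denominator (`hjcf_replicate_two_append`). Applied to the empty list, read as `1 / 0`, this
evaluates the trailing twos to `t / (t - 1)`. With `u = (s + 2) t + 1`, the entries `s + 3, 2, 2, 3`
then give successively `u / t`, `(2u - t) / u`, `(3u - 2t) / (2u - t)` and
`(7u - 5t) / (3u - 2t)`, and the leading twos are handled by the same lemma with
`A - B = 4u - 3t` and `k = s + 1`.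
-/

/-- Hirzebruch–Jung continued fraction `[a₀, a₁, …, aₙ]⁻ = a₀ − 1/(a₁ − 1/(⋯ − 1/aₙ))`
of a list of integers (the value on the empty list is junk). -/
def hjcf : List ℤ → ℚ
  | [] => 0
  | [a] => (a : ℚ)
  | a :: b :: l => (a : ℚ) - 1 / hjcf (b :: l)

/-- The recursion also holds for an empty tail, because of the conventions `hjcf [] = 0` and
`1 / 0 = 0`. -/
lemma hjcf_cons (a : ℤ) (l : List ℤ) : hjcf (a :: l) = (a : ℚ) - 1 / hjcf l := by
  cases l <;> simp [hjcf]

/-- Each leading `2` adds `D` to the numerator and the denominator of `(B + D) / B`. The case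
`B = 0` is allowed: it covers the empty list, whose junk value `0` equals `1 / 0`. -/
lemma hjcf_replicate_two_append (l : List ℤ) (B D : ℚ) (hD : 0 ≤ D) (hpos : 0 < B + D)
    (hl : hjcf l = (B + D) / B) (k : ℕ) :
    hjcf (List.replicate k 2 ++ l) = (B + D + k * D) / (B + k * D) := by
  induction k with
  | zero => simpa using hl
  | succ k ih =>
    have h : B + D + k * D ≠ 0 := by positivity
    have h' : B + (k + 1) * D = B + D + k * D := by ring
    rw [List.replicate_succ, List.cons_append, hjcf_cons, ih, one_div_div]
    push_cast
    rw [h', eq_div_iff h, sub_mul, div_mul_cancel₀ _ h]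
    ring

/-- `[2^{[s+1]}, 3, 2, 2, s+3, 2^{[t−1]}]⁻ = p/q` with
`p = 11 + 4s + 14t + 16st + 4s²t` and `q = 7 + 4s + 9t + 12st + 4s²t`. -/
theorem hjcf_of_realization_sequence (s t : ℕ) (ht : 1 ≤ t) :
    hjcf (List.replicate (s + 1) 2 ++ [3, 2, 2, (s : ℤ) + 3] ++ List.replicate (t - 1) 2)
      = (11 + 4 * (s : ℚ) + 14 * (t : ℚ) + 16 * (s : ℚ) * (t : ℚ)
          + 4 * (s : ℚ) ^ 2 * (t : ℚ))
        / (7 + 4 * (s : ℚ) + 9 * (t : ℚ) + 12 * (s : ℚ) * (t : ℚ)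
          + 4 * (s : ℚ) ^ 2 * (t : ℚ)) := by
  obtain ⟨m, rfl⟩ : ∃ m, t = m + 1 := ⟨t - 1, by omega⟩
  have tail : hjcf (List.replicate m 2) = ((m : ℚ) + 1) / m := by
    have h := hjcf_replicate_two_append [] 0 1 (by norm_num) (by norm_num) (by simp [hjcf]) m
    simpa [add_comm] using h
  obtain ⟨u, hu⟩ : ∃ u : ℚ, u = (s + 2) * (m + 1) + 1 := ⟨_, rfl⟩
  obtain ⟨r, hr⟩ : ∃ r : ℚ, r = m + 1 := ⟨_, rfl⟩
  have hr0 : 0 < r := by rw [hr]; positivity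
  have hur : 2 * r < u := by
    have : (0 : ℚ) ≤ s * (m + 1) := by positivity
    rw [hu, hr]
    linarith
  have h1 : hjcf (((s : ℤ) + 3) :: List.replicate m 2) = u / r := by
    rw [hjcf_cons, tail, one_div_div, ← hr, eq_div_iff hr0.ne', sub_mul, div_mul_cancel₀ _ hr0.ne',
      hu, hr]
    push_cast
    ring
  have h2 : hjcf (2 :: ((s : ℤ) + 3) :: List.replicate m 2) = (2 * u - r) / u := by
    have : u ≠ 0 := by linarith
    rw [hjcf_cons, h1, one_div_div]
    push_cast
    field_simp
  have h3 : hjcf (2 :: 2 :: ((s : ℤ) + 3) :: List.replicate m 2)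
      = (3 * u - 2 * r) / (2 * u - r) := by
    have : 2 * u - r ≠ 0 := by linarith
    rw [hjcf_cons, h2, one_div_div]
    push_cast
    field_simp
    ring
  have h4 : hjcf (3 :: 2 :: 2 :: ((s : ℤ) + 3) :: List.replicate m 2)
      = ((3 * u - 2 * r) + (4 * u - 3 * r)) / (3 * u - 2 * r) := by
    have : 3 * u - 2 * r ≠ 0 := by linarith
    rw [hjcf_cons, h3, one_div_div]
    push_cast
    field_simp
    ring
  have h5 := hjcf_replicate_two_append _ _ _ (by linarith) (by linarith) h4 (s + 1)
  rw [Nat.add_sub_cancel, List.append_assoc]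
  refine h5.trans ?_
  rw [hu, hr]
  push_cast
  congr 1 <;> ring
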